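/- Subadditivity of von Neumann entropy: let T be a density matrix on the bipartite space ℂ^m ⊗ ℂ^n (i.e., a positive-semidefinite Hermitian matrix of trace 1 indexed by pairs (i,k) with i ∈ {1,…,m}, k ∈ {1,…,n}), and let T₁ and T₂ be its partial traces, T₁(i,j) = Σ_k T((i,k),(j,k)) and T₂(k,l) = Σ_i T((i,k),(i,l)). Then S(T) ≤ S(T₁) + S(T₂), and equality holds if and only if T = T₁ ⊗ T₂ (the Kronecker product). -/

import Mathlib

open scoped Kronecker ComplexOrder

/-- The von Neumann entropy `S(T) = −Σᵢ λᵢ ln λᵢ` of a Hermitian matrix, computed from its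
eigenvalues (with the convention `0 ln 0 = 0`, automatic since `Real.log 0 = 0`). -/
noncomputable def vnEntropy {n : Type*} [Fintype n] [DecidableEq n]
    {A : Matrix n n ℂ} (hA : A.IsHermitian) : ℝ :=
  -∑ i, hA.eigenvalues i * Real.log (hA.eigenvalues i)

/-! `S(T)` is unchanged by a local change of basis `U₁ ⊗ U₂`, which lets us assume that both partial
traces are diagonal. Then two classical inequalities, each an instance of Jensen for the strictly
concave function `-x ln x`, give the bound. First, the diagonal of `T` is the image of its spectrum
under the doubly stochastic matrix of the squared moduli of the eigenbasis coordinates, so `S(T)` is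
at most the Shannon entropy of the diagonal, with equality only for diagonal `T`. Second, the
diagonal is a joint distribution whose marginals are the spectra of `T₁` and `T₂`, and Shannon
entropy is subadditive, with equality only for product distributions. -/

section Shannon

variable {ι κ : Type*}

/-- The Shannon entropy `-∑ᵢ pᵢ ln pᵢ` in nats. It is defined for every vector `p`, whether or not
it is a probability distribution, so that it applies to spectra and diagonals of matrices. -/
noncomputable def shannonEntropy [Fintype ι] (p : ι → ℝ) : ℝ :=
  ∑ i, Real.negMulLog (p i)

/-- The marginal on the first factor of a joint distribution. -/
def fstMarginal [Fintype κ] (d : ι × κ → ℝ) (i : ι) : ℝ := ∑ k, d (i, k)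

/-- The marginal on the second factor of a joint distribution. -/
def sndMarginal [Fintype ι] (d : ι × κ → ℝ) (k : κ) : ℝ := ∑ i, d (i, k)

section DoublyStochastic

open Matrix

variable [Fintype ι] [DecidableEq ι] {c : Matrix ι ι ℝ} {p : ι → ℝ}

theorem shannonEntropy_eq_sum_sum_smul_negMulLog (hc : c ∈ doublyStochastic ℝ ι) (p : ι → ℝ) :
    shannonEntropy p = ∑ i, ∑ j, c i j • Real.negMulLog (p j) := by
  rw [Finset.sum_comm]
  simp_rw [← Finset.sum_smul, sum_col_of_mem_doublyStochastic hc, one_smul, shannonEntropy]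

theorem sum_smul_negMulLog_le_negMulLog_mulVec (hc : c ∈ doublyStochastic ℝ ι)
    (hp : ∀ j, 0 ≤ p j) (i : ι) :
    ∑ j, c i j • Real.negMulLog (p j) ≤ Real.negMulLog ((c *ᵥ p) i) :=
  Real.concaveOn_negMulLog.le_map_sum (fun _ _ ↦ nonneg_of_mem_doublyStochastic hc)
    (sum_row_of_mem_doublyStochastic hc i) fun j _ ↦ hp j

theorem shannonEntropy_le_shannonEntropy_mulVec (hc : c ∈ doublyStochastic ℝ ι)
    (hp : ∀ j, 0 ≤ p j) : shannonEntropy p ≤ shannonEntropy (c *ᵥ p) := by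
  rw [shannonEntropy_eq_sum_sum_smul_negMulLog hc]
  exact Finset.sum_le_sum fun i _ ↦ sum_smul_negMulLog_le_negMulLog_mulVec hc hp i

theorem shannonEntropy_eq_shannonEntropy_mulVec_iff (hc : c ∈ doublyStochastic ℝ ι)
    (hp : ∀ j, 0 ≤ p j) :
    shannonEntropy p = shannonEntropy (c *ᵥ p) ↔ ∀ i j, c i j ≠ 0 → p j = (c *ᵥ p) i := by
  rw [shannonEntropy_eq_sum_sum_smul_negMulLog hc, shannonEntropy,
    Finset.sum_eq_sum_iff_of_le fun i _ ↦ sum_smul_negMulLog_le_negMulLog_mulVec hc hp i]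
  simp only [Finset.mem_univ, forall_const]
  refine forall_congr' fun i ↦ eq_comm.trans ?_
  simpa only [Finset.mem_univ, forall_const, smul_eq_mul, mulVec, dotProduct] using
    Real.strictConcaveOn_negMulLog.map_sum_eq_iff'
      (fun _ _ ↦ nonneg_of_mem_doublyStochastic hc) (sum_row_of_mem_doublyStochastic hc i)
      fun j _ ↦ hp j

end DoublyStochastic

variable [Fintype ι] {d : ι × κ → ℝ}

theorem sndMarginal_nonneg (hd : ∀ x, 0 ≤ d x) (k : κ) : 0 ≤ sndMarginal d k :=
  Finset.sum_nonneg fun i _ ↦ hd (i, k)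

theorem sndMarginal_mul_div_sndMarginal (hd : ∀ x, 0 ≤ d x) (i : ι) (k : κ) :
    sndMarginal d k * (d (i, k) / sndMarginal d k) = d (i, k) := by
  refine mul_div_cancel_of_imp' fun hk ↦ ?_
  exact (Finset.sum_eq_zero_iff_of_nonneg fun i _ ↦ hd (i, k)).1 hk i (Finset.mem_univ i)

variable [Fintype κ]

theorem shannonEntropy_chain_rule (hd : ∀ x, 0 ≤ d x) :
    shannonEntropy d = shannonEntropy (sndMarginal d) +
      ∑ i, ∑ k, sndMarginal d k • Real.negMulLog (d (i, k) / sndMarginal d k) := by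
  have split_term (i : ι) (k : κ) : Real.negMulLog (d (i, k)) =
      d (i, k) / sndMarginal d k * Real.negMulLog (sndMarginal d k) +
        sndMarginal d k • Real.negMulLog (d (i, k) / sndMarginal d k) := by
    rw [smul_eq_mul, ← Real.negMulLog_mul, sndMarginal_mul_div_sndMarginal hd]
  have sum_conditional (k : κ) :
      ∑ i, d (i, k) / sndMarginal d k * Real.negMulLog (sndMarginal d k) =
        Real.negMulLog (sndMarginal d k) := by
    rw [← Finset.sum_mul, ← Finset.sum_div]
    by_cases hk : sndMarginal d k = 0
    · simp [hk]
    · rw [← sndMarginal, div_self hk, one_mul]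
  simp_rw [shannonEntropy, Fintype.sum_prod_type, split_term, Finset.sum_add_distrib]
  rw [Finset.sum_comm]
  simp_rw [sum_conditional]

theorem sum_sndMarginal (d : ι × κ → ℝ) : ∑ k, sndMarginal d k = ∑ x, d x :=
  (Fintype.sum_prod_type_right d).symm

theorem sum_sndMarginal_smul_div_sndMarginal (hd : ∀ x, 0 ≤ d x) (i : ι) :
    ∑ k, sndMarginal d k • (d (i, k) / sndMarginal d k) = fstMarginal d i := by
  simp_rw [smul_eq_mul, sndMarginal_mul_div_sndMarginal hd, fstMarginal]

theorem sum_smul_negMulLog_conditional_le (hd : ∀ x, 0 ≤ d x) (hsum : ∑ x, d x = 1) (i : ι) :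
    ∑ k, sndMarginal d k • Real.negMulLog (d (i, k) / sndMarginal d k) ≤
      Real.negMulLog (fstMarginal d i) := by
  rw [← sum_sndMarginal_smul_div_sndMarginal hd]
  exact Real.concaveOn_negMulLog.le_map_sum (fun k _ ↦ sndMarginal_nonneg hd k)
    ((sum_sndMarginal d).trans hsum) fun k _ ↦ div_nonneg (hd _) (sndMarginal_nonneg hd k)

theorem sum_smul_negMulLog_conditional_eq_iff (hd : ∀ x, 0 ≤ d x) (hsum : ∑ x, d x = 1) (i : ι) :
    ∑ k, sndMarginal d k • Real.negMulLog (d (i, k) / sndMarginal d k) =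
        Real.negMulLog (fstMarginal d i) ↔
      ∀ k, d (i, k) = fstMarginal d i * sndMarginal d k := by
  have jensen := Real.strictConcaveOn_negMulLog.map_sum_eq_iff'
    (t := Finset.univ) (p := fun k ↦ d (i, k) / sndMarginal d k)
    (fun k _ ↦ sndMarginal_nonneg hd k) ((sum_sndMarginal d).trans hsum)
    fun k _ ↦ div_nonneg (hd _) (sndMarginal_nonneg hd k)
  rw [sum_sndMarginal_smul_div_sndMarginal hd] at jensen
  refine eq_comm.trans (jensen.trans ?_)
  simp only [Finset.mem_univ, forall_const]
  refine forall_congr' fun k ↦ ?_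
  by_cases hk : sndMarginal d k = 0
  · have hdk : d (i, k) = 0 := by rw [← sndMarginal_mul_div_sndMarginal hd, hk, zero_mul]
    simp [hk, hdk]
  · simp only [ne_eq, hk, not_false_eq_true, forall_const, div_eq_iff]

theorem shannonEntropy_le_add_marginals (hd : ∀ x, 0 ≤ d x) (hsum : ∑ x, d x = 1) :
    shannonEntropy d ≤ shannonEntropy (fstMarginal d) + shannonEntropy (sndMarginal d) := by
  rw [shannonEntropy_chain_rule hd, add_comm]
  gcongr
  exact Finset.sum_le_sum fun i _ ↦ sum_smul_negMulLog_conditional_le hd hsum i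

theorem shannonEntropy_eq_add_marginals_iff (hd : ∀ x, 0 ≤ d x) (hsum : ∑ x, d x = 1) :
    shannonEntropy d = shannonEntropy (fstMarginal d) + shannonEntropy (sndMarginal d) ↔
      ∀ i k, d (i, k) = fstMarginal d i * sndMarginal d k := by
  rw [shannonEntropy_chain_rule hd, add_comm, add_left_inj, shannonEntropy,
    Finset.sum_eq_sum_iff_of_le fun i _ ↦ sum_smul_negMulLog_conditional_le hd hsum i]
  simp only [Finset.mem_univ, forall_const, sum_smul_negMulLog_conditional_eq_iff hd hsum]

end Shannon

section Spectral

open Matrix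

variable {𝕜 ι : Type*} [RCLike 𝕜] [Fintype ι] [DecidableEq ι] {A : Matrix ι ι 𝕜}

theorem map_norm_sq_mem_doublyStochastic {U : Matrix ι ι 𝕜} (hU : U ∈ unitaryGroup ι 𝕜) :
    U.map (fun z ↦ ‖z‖ ^ 2) ∈ doublyStochastic ℝ ι := by
  refine mem_doublyStochastic_iff_sum.2 ⟨fun _ _ ↦ sq_nonneg _, fun i ↦ ?_, fun j ↦ ?_⟩
  · have row := congrFun₂ (mem_unitaryGroup_iff.1 hU) i i
    rw [mul_apply, one_apply_eq] at row
    simp_rw [star_apply, RCLike.star_def, RCLike.mul_conj] at row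
    exact_mod_cast row
  · have col := congrFun₂ (mem_unitaryGroup_iff'.1 hU) j j
    rw [mul_apply, one_apply_eq] at col
    simp_rw [star_apply, RCLike.star_def, RCLike.conj_mul] at col
    exact_mod_cast col

theorem star_eigenvectorUnitary_mul_mul (hA : A.IsHermitian) :
    star (hA.eigenvectorUnitary : Matrix ι ι 𝕜) * A * hA.eigenvectorUnitary =
      diagonal (fun i ↦ (hA.eigenvalues i : 𝕜)) :=
  (Unitary.conjStarAlgAut_star_apply _ _).symm.trans hA.conjStarAlgAut_star_eigenvectorUnitary

theorem exists_unitary_conj_isDiag (hA : A.IsHermitian) :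
    ∃ U ∈ unitaryGroup ι 𝕜, (star U * A * U).IsDiag :=
  ⟨_, hA.eigenvectorUnitary.2, star_eigenvectorUnitary_mul_mul hA ▸ isDiag_diagonal _⟩

theorem mul_eigenvectorUnitary (hA : A.IsHermitian) :
    A * hA.eigenvectorUnitary =
      hA.eigenvectorUnitary * diagonal (fun i ↦ (hA.eigenvalues i : 𝕜)) := by
  rw [← star_eigenvectorUnitary_mul_mul, ← mul_assoc, ← mul_assoc,
    mem_unitaryGroup_iff.1 hA.eigenvectorUnitary.2, one_mul]

theorem re_diag_eq_norm_sq_mulVec_eigenvalues (hA : A.IsHermitian) :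
    (fun i ↦ RCLike.re (A i i)) =
      (hA.eigenvectorUnitary : Matrix ι ι 𝕜).map (fun z ↦ ‖z‖ ^ 2) *ᵥ hA.eigenvalues := by
  ext i
  have entry := congrFun₂ hA.spectral_theorem i i
  rw [Unitary.conjStarAlgAut_apply, mul_apply] at entry
  rw [entry, map_sum, mulVec, dotProduct]
  refine Finset.sum_congr rfl fun j _ ↦ ?_
  rw [mul_diagonal, star_apply, RCLike.star_def, mul_right_comm, RCLike.mul_conj, map_apply,
    Function.comp_apply, RCLike.re_mul_ofReal, ← RCLike.ofReal_pow, RCLike.ofReal_re]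

theorem isDiag_iff_eigenvalues_eq_re_diag (hA : A.IsHermitian) :
    A.IsDiag ↔ ∀ i j, (hA.eigenvectorUnitary : Matrix ι ι 𝕜) i j ≠ 0 →
      hA.eigenvalues j = RCLike.re (A i i) := by
  have isUnit_eigenvectorUnitary : IsUnit (hA.eigenvectorUnitary : Matrix ι ι 𝕜) :=
    (Unitary.toUnits hA.eigenvectorUnitary).isUnit
  rw [isDiag_iff_diagonal_diag, ← isUnit_eigenvectorUnitary.mul_left_inj,
    mul_eigenvectorUnitary hA, ← Matrix.ext_iff]
  refine forall₂_congr fun i j ↦ ?_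
  rw [diagonal_mul, mul_diagonal, mul_comm, diag_apply, ← hA.coe_re_apply_self i,
    mul_eq_mul_left_iff]
  simp only [RCLike.ofReal_inj, RCLike.ofReal_re]
  tauto

end Spectral

section VonNeumann

open Matrix

variable {ι : Type*} [Fintype ι] [DecidableEq ι] {A : Matrix ι ι ℂ}

theorem vnEntropy_eq_shannonEntropy_eigenvalues (hA : A.IsHermitian) :
    vnEntropy hA = shannonEntropy hA.eigenvalues := by
  simp only [vnEntropy, shannonEntropy, Real.negMulLog_eq_neg, Finset.sum_neg_distrib]

theorem vnEntropy_eq_of_eq_unitary_conj {B : Matrix ι ι ℂ} (hA : A.IsHermitian)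
    (hB : B.IsHermitian) {U : Matrix ι ι ℂ} (hU : U ∈ unitaryGroup ι ℂ)
    (hBA : B = star U * A * U) : vnEntropy hB = vnEntropy hA := by
  have charpoly_eq : B.charpoly = A.charpoly := by
    rw [hBA, charpoly_mul_comm, ← mul_assoc, mem_unitaryGroup_iff.1 hU, one_mul]
  rw [vnEntropy, vnEntropy, (hB.eigenvalues_eq_eigenvalues_iff hA).2 charpoly_eq]

theorem vnEntropy_le_shannonEntropy_diag (hA : A.PosSemidef) :
    vnEntropy hA.isHermitian ≤ shannonEntropy fun i ↦ RCLike.re (A i i) := by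
  have doublyStochastic :=
    map_norm_sq_mem_doublyStochastic hA.isHermitian.eigenvectorUnitary.2
  rw [vnEntropy_eq_shannonEntropy_eigenvalues,
    re_diag_eq_norm_sq_mulVec_eigenvalues hA.isHermitian]
  exact shannonEntropy_le_shannonEntropy_mulVec doublyStochastic hA.eigenvalues_nonneg

theorem vnEntropy_eq_shannonEntropy_diag_iff (hA : A.PosSemidef) :
    vnEntropy hA.isHermitian = shannonEntropy (fun i ↦ RCLike.re (A i i)) ↔ A.IsDiag := by
  have doublyStochastic :=
    map_norm_sq_mem_doublyStochastic hA.isHermitian.eigenvectorUnitary.2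
  rw [isDiag_iff_eigenvalues_eq_re_diag hA.isHermitian, vnEntropy_eq_shannonEntropy_eigenvalues,
    re_diag_eq_norm_sq_mulVec_eigenvalues hA.isHermitian,
    shannonEntropy_eq_shannonEntropy_mulVec_iff doublyStochastic hA.eigenvalues_nonneg,
    ← re_diag_eq_norm_sq_mulVec_eigenvalues hA.isHermitian]
  simp only [map_apply, ne_eq, sq_eq_zero_iff, norm_eq_zero]

end VonNeumann

section PartialTrace

open Matrix

variable {ι κ : Type*}

section CommSemiring

variable {R : Type*} [CommSemiring R]

/-- The partial trace over the right factor of an operator on a tensor product; it is an operator on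
the left factor. -/
def partialTraceRight [Fintype κ] (T : Matrix (ι × κ) (ι × κ) R) : Matrix ι ι R :=
  of fun i j ↦ ∑ k, T (i, k) (j, k)

/-- The partial trace over the left factor of an operator on a tensor product; it is an operator on
the right factor. -/
def partialTraceLeft [Fintype ι] (T : Matrix (ι × κ) (ι × κ) R) : Matrix κ κ R :=
  of fun k l ↦ ∑ i, T (i, k) (i, l)

theorem partialTraceLeft_eq_partialTraceRight_submatrix_swap [Fintype ι]
    (T : Matrix (ι × κ) (ι × κ) R) :
    partialTraceLeft T = partialTraceRight (T.submatrix Prod.swap Prod.swap) :=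
  rfl

variable [Fintype ι] [Fintype κ]

theorem partialTraceRight_kronecker_one_mul_mul_kronecker_one [DecidableEq κ]
    (T : Matrix (ι × κ) (ι × κ) R) (A C : Matrix ι ι R) :
    partialTraceRight ((A ⊗ₖ (1 : Matrix κ κ R)) * T * (C ⊗ₖ (1 : Matrix κ κ R))) =
      A * partialTraceRight T * C := by
  ext i j
  simp only [partialTraceRight, of_apply, mul_apply, kronecker_apply, one_apply,
    Fintype.sum_prod_type, mul_ite, ite_mul, mul_one, mul_zero, zero_mul, Finset.sum_ite_eq,
    Finset.sum_ite_eq', Finset.mem_univ, if_true]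
  simp only [Finset.mul_sum, Finset.sum_mul]
  exact Finset.sum_comm.trans (Finset.sum_congr rfl fun _ _ ↦ Finset.sum_comm)

theorem partialTraceRight_one_kronecker_mul_comm [DecidableEq ι]
    (T : Matrix (ι × κ) (ι × κ) R) (B : Matrix κ κ R) :
    partialTraceRight (((1 : Matrix ι ι R) ⊗ₖ B) * T) =
      partialTraceRight (T * ((1 : Matrix ι ι R) ⊗ₖ B)) := by
  ext i j
  simp only [partialTraceRight, of_apply, mul_apply, kronecker_apply, one_apply,
    Fintype.sum_prod_type, mul_ite, ite_mul, one_mul, mul_zero, zero_mul, Finset.sum_ite_irrel,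
    Finset.sum_const_zero, Finset.sum_ite_eq, Finset.sum_ite_eq', Finset.mem_univ, if_true]
  rw [Finset.sum_comm]
  simp only [mul_comm]

theorem partialTraceRight_kronecker_mul_mul_kronecker [DecidableEq κ] {B D : Matrix κ κ R}
    (hDB : D * B = 1) (T : Matrix (ι × κ) (ι × κ) R) (A C : Matrix ι ι R) :
    partialTraceRight ((A ⊗ₖ B) * T * (C ⊗ₖ D)) = A * partialTraceRight T * C := by
  classical
  have split_left : A ⊗ₖ B = (1 ⊗ₖ B) * (A ⊗ₖ 1) := by
    rw [← mul_kronecker_mul, one_mul, mul_one]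
  have merge_right : (C ⊗ₖ D) * (1 ⊗ₖ B) = C ⊗ₖ 1 := by
    rw [← mul_kronecker_mul, mul_one, hDB]
  rw [split_left, mul_assoc, mul_assoc, partialTraceRight_one_kronecker_mul_comm, mul_assoc,
    mul_assoc, merge_right, ← mul_assoc, partialTraceRight_kronecker_one_mul_mul_kronecker_one]

theorem partialTraceLeft_kronecker_mul_mul_kronecker [DecidableEq ι] {A C : Matrix ι ι R}
    (hCA : C * A = 1) (T : Matrix (ι × κ) (ι × κ) R) (B D : Matrix κ κ R) :
    partialTraceLeft ((A ⊗ₖ B) * T * (C ⊗ₖ D)) = B * partialTraceLeft T * D := by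
  have swap_kronecker (X : Matrix ι ι R) (Y : Matrix κ κ R) :
      (X ⊗ₖ Y).submatrix Prod.swap Prod.swap = Y ⊗ₖ X := by
    ext; exact mul_comm _ _
  simp only [partialTraceLeft_eq_partialTraceRight_submatrix_swap]
  rw [← submatrix_mul_equiv _ _ _ (Equiv.prodComm κ ι),
    ← submatrix_mul_equiv _ _ _ (Equiv.prodComm κ ι)]
  simp only [Equiv.coe_prodComm, swap_kronecker,
    partialTraceRight_kronecker_mul_mul_kronecker hCA]

end CommSemiring

section Unitary

variable {R : Type*} [CommRing R] [StarRing R] [Fintype ι] [Fintype κ]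

theorem partialTraceRight_unitary_conj [DecidableEq κ] {V : Matrix κ κ R}
    (hV : V ∈ unitaryGroup κ R) (T : Matrix (ι × κ) (ι × κ) R) (U : Matrix ι ι R) :
    partialTraceRight (star (U ⊗ₖ V) * T * (U ⊗ₖ V)) = star U * partialTraceRight T * U := by
  rw [star_eq_conjTranspose (U ⊗ₖ V), conjTranspose_kronecker]
  exact partialTraceRight_kronecker_mul_mul_kronecker (mem_unitaryGroup_iff.1 hV) T _ _

theorem partialTraceLeft_unitary_conj [DecidableEq ι] {U : Matrix ι ι R}
    (hU : U ∈ unitaryGroup ι R) (T : Matrix (ι × κ) (ι × κ) R) (V : Matrix κ κ R) :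
    partialTraceLeft (star (U ⊗ₖ V) * T * (U ⊗ₖ V)) = star V * partialTraceLeft T * V := by
  rw [star_eq_conjTranspose (U ⊗ₖ V), conjTranspose_kronecker]
  exact partialTraceLeft_kronecker_mul_mul_kronecker (mem_unitaryGroup_iff.1 hU) T _ _

theorem unitary_conj_eq_kronecker_partialTrace_iff [DecidableEq ι] [DecidableEq κ]
    {T : Matrix (ι × κ) (ι × κ) R} {U : Matrix ι ι R} {V : Matrix κ κ R}
    (hU : U ∈ unitaryGroup ι R) (hV : V ∈ unitaryGroup κ R) :
    star (U ⊗ₖ V) * T * (U ⊗ₖ V) =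
        partialTraceRight (star (U ⊗ₖ V) * T * (U ⊗ₖ V)) ⊗ₖ
          partialTraceLeft (star (U ⊗ₖ V) * T * (U ⊗ₖ V)) ↔
      T = partialTraceRight T ⊗ₖ partialTraceLeft T := by
  have isUnit_kronecker : IsUnit (U ⊗ₖ V) :=
    (Unitary.toUnits ⟨_, kronecker_mem_unitary hU hV⟩).isUnit
  rw [partialTraceRight_unitary_conj hV, partialTraceLeft_unitary_conj hU, mul_kronecker_mul,
    mul_kronecker_mul, isUnit_kronecker.mul_left_inj, star_eq_conjTranspose U,
    star_eq_conjTranspose V, ← conjTranspose_kronecker, ← star_eq_conjTranspose,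
    isUnit_kronecker.star.mul_right_inj]

end Unitary

variable {𝕜 : Type*} [RCLike 𝕜]

theorem posSemidef_partialTraceRight [Fintype κ] {T : Matrix (ι × κ) (ι × κ) 𝕜}
    (hT : T.PosSemidef) : (partialTraceRight T).PosSemidef := by
  have eq_sum : partialTraceRight T = ∑ k, T.submatrix (·, k) (·, k) := by
    ext i j
    simp only [partialTraceRight, of_apply, Matrix.sum_apply, submatrix_apply]
  rw [eq_sum]
  exact posSemidef_sum _ fun k _ ↦ hT.submatrix _

theorem posSemidef_partialTraceLeft [Fintype ι] {T : Matrix (ι × κ) (ι × κ) 𝕜}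
    (hT : T.PosSemidef) : (partialTraceLeft T).PosSemidef :=
  posSemidef_partialTraceRight (hT.submatrix Prod.swap)

theorem fstMarginal_re_diag [Fintype κ] (T : Matrix (ι × κ) (ι × κ) 𝕜) :
    fstMarginal (fun x ↦ RCLike.re (T x x)) = fun i ↦ RCLike.re (partialTraceRight T i i) := by
  ext i
  simp only [fstMarginal, partialTraceRight, of_apply, map_sum]

theorem sndMarginal_re_diag [Fintype ι] (T : Matrix (ι × κ) (ι × κ) 𝕜) :
    sndMarginal (fun x ↦ RCLike.re (T x x)) = fun k ↦ RCLike.re (partialTraceLeft T k k) := by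
  ext k
  simp only [sndMarginal, partialTraceLeft, of_apply, map_sum]

end PartialTrace

section Subadditivity

open Matrix

variable {𝕜 ι κ : Type*} [RCLike 𝕜]

theorem eq_iff_isDiag_and_re_diag_eq {A B : Matrix ι ι 𝕜} (hA : A.IsHermitian)
    (hB : B.IsHermitian) (hBdiag : B.IsDiag) :
    A = B ↔ A.IsDiag ∧ ∀ i, RCLike.re (A i i) = RCLike.re (B i i) := by
  classical
  refine ⟨by rintro rfl; exact ⟨hBdiag, fun _ ↦ rfl⟩, fun ⟨hAdiag, hre⟩ ↦ ?_⟩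
  rw [← hAdiag.diagonal_diag, ← hBdiag.diagonal_diag, ← hA.coe_re_diag, ← hB.coe_re_diag]
  exact congrArg _ (funext fun i ↦ congrArg _ (hre i))

theorem eq_kronecker_iff_isDiag_and_re_diag_eq {T : Matrix (ι × κ) (ι × κ) 𝕜} {A : Matrix ι ι 𝕜}
    {B : Matrix κ κ 𝕜} (hT : T.IsHermitian) (hA : A.IsHermitian) (hB : B.IsHermitian)
    (hAdiag : A.IsDiag) (hBdiag : B.IsDiag) :
    T = A ⊗ₖ B ↔
      T.IsDiag ∧ ∀ i k, RCLike.re (T (i, k) (i, k)) = RCLike.re (A i i) * RCLike.re (B k k) := by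
  classical
  have isHermitian_kronecker : (A ⊗ₖ B).IsHermitian := by
    rw [IsHermitian, conjTranspose_kronecker, hA, hB]
  have re_kronecker_diag (i : ι) (k : κ) :
      RCLike.re ((A ⊗ₖ B) (i, k) (i, k)) = RCLike.re (A i i) * RCLike.re (B k k) := by
    rw [kronecker_apply, ← hA.coe_re_apply_self i, RCLike.re_ofReal_mul, RCLike.ofReal_re]
  rw [eq_iff_isDiag_and_re_diag_eq hT isHermitian_kronecker (hAdiag.kronecker hBdiag), Prod.forall]
  simp only [re_kronecker_diag]

variable [Fintype ι] [Fintype κ] [DecidableEq ι] [DecidableEq κ] {T : Matrix (ι × κ) (ι × κ) ℂ}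

theorem vnEntropy_subadditivity_of_isDiag_partialTrace (hT : T.PosSemidef) (htrace : T.trace = 1)
    (h₁ : (partialTraceRight T).IsDiag) (h₂ : (partialTraceLeft T).IsDiag) :
    vnEntropy hT.isHermitian ≤ vnEntropy (posSemidef_partialTraceRight hT).isHermitian +
        vnEntropy (posSemidef_partialTraceLeft hT).isHermitian ∧
      (vnEntropy hT.isHermitian = vnEntropy (posSemidef_partialTraceRight hT).isHermitian +
        vnEntropy (posSemidef_partialTraceLeft hT).isHermitian ↔
        T = partialTraceRight T ⊗ₖ partialTraceLeft T) := by
  have hT₁ := posSemidef_partialTraceRight hT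
  have hT₂ := posSemidef_partialTraceLeft hT
  have diag_nonneg (x : ι × κ) : 0 ≤ RCLike.re (T x x) :=
    (RCLike.nonneg_iff.1 hT.diag_nonneg).1
  have sum_diag : ∑ x, RCLike.re (T x x) = 1 := by
    simpa only [trace, diag_apply, map_sum, RCLike.one_re] using congrArg RCLike.re htrace
  have quantum_le := vnEntropy_le_shannonEntropy_diag hT
  have classical_le := shannonEntropy_le_add_marginals diag_nonneg sum_diag
  have classical_eq_iff := shannonEntropy_eq_add_marginals_iff diag_nonneg sum_diag
  rw [fstMarginal_re_diag, sndMarginal_re_diag, ← (vnEntropy_eq_shannonEntropy_diag_iff hT₁).2 h₁,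
    ← (vnEntropy_eq_shannonEntropy_diag_iff hT₂).2 h₂] at classical_le classical_eq_iff
  refine ⟨quantum_le.trans classical_le, ?_⟩
  rw [eq_kronecker_iff_isDiag_and_re_diag_eq hT.isHermitian hT₁.isHermitian hT₂.isHermitian h₁ h₂,
    ← vnEntropy_eq_shannonEntropy_diag_iff hT, ← classical_eq_iff]
  exact ⟨fun h ↦ ⟨by linarith, by linarith⟩, fun ⟨h, h'⟩ ↦ h.trans h'⟩

theorem vnEntropy_subadditivity_general (hT : T.PosSemidef) (htrace : T.trace = 1) :
    vnEntropy hT.isHermitian ≤ vnEntropy (posSemidef_partialTraceRight hT).isHermitian +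
        vnEntropy (posSemidef_partialTraceLeft hT).isHermitian ∧
      (vnEntropy hT.isHermitian = vnEntropy (posSemidef_partialTraceRight hT).isHermitian +
        vnEntropy (posSemidef_partialTraceLeft hT).isHermitian ↔
        T = partialTraceRight T ⊗ₖ partialTraceLeft T) := by
  have hT₁ := (posSemidef_partialTraceRight hT).isHermitian
  have hT₂ := (posSemidef_partialTraceLeft hT).isHermitian
  obtain ⟨U₁, hU₁, isDiag₁⟩ := exists_unitary_conj_isDiag hT₁
  obtain ⟨U₂, hU₂, isDiag₂⟩ := exists_unitary_conj_isDiag hT₂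
  have hW := kronecker_mem_unitary hU₁ hU₂
  have posSemidef_conj : (star (U₁ ⊗ₖ U₂) * T * (U₁ ⊗ₖ U₂)).PosSemidef :=
    hT.conjTranspose_mul_mul_same _
  have trace_conj : (star (U₁ ⊗ₖ U₂) * T * (U₁ ⊗ₖ U₂)).trace = 1 := by
    rw [trace_mul_comm, ← mul_assoc, mem_unitaryGroup_iff.1 hW, one_mul, htrace]
  have right_conj := partialTraceRight_unitary_conj hU₂ T U₁
  have left_conj := partialTraceLeft_unitary_conj hU₁ T U₂
  have rotated := vnEntropy_subadditivity_of_isDiag_partialTrace posSemidef_conj trace_conj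
    (right_conj ▸ isDiag₁) (left_conj ▸ isDiag₂)
  rwa [vnEntropy_eq_of_eq_unitary_conj hT.isHermitian _ hW rfl,
    vnEntropy_eq_of_eq_unitary_conj hT₁ _ hU₁ right_conj,
    vnEntropy_eq_of_eq_unitary_conj hT₂ _ hU₂ left_conj,
    unitary_conj_eq_kronecker_partialTrace_iff hU₁ hU₂] at rotated

end Subadditivity

/-- subadditivity of von Neumann entropy. For a density matrix `T` on
`ℂ^m ⊗ ℂ^n` with partial traces `T₁`, `T₂`, one has `S(T) ≤ S(T₁) + S(T₂)`, with equality
iff `T = T₁ ⊗ T₂`. -/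
theorem vnEntropy_subadditivity (m n : ℕ)
    (T : Matrix (Fin m × Fin n) (Fin m × Fin n) ℂ)
    (hT : T.PosSemidef) (htrace : T.trace = 1)
    (T₁ : Matrix (Fin m) (Fin m) ℂ) (hT₁def : ∀ i j, T₁ i j = ∑ k, T (i, k) (j, k))
    (T₂ : Matrix (Fin n) (Fin n) ℂ) (hT₂def : ∀ k l, T₂ k l = ∑ i, T (i, k) (i, l))
    (h₁ : T₁.IsHermitian) (h₂ : T₂.IsHermitian) :
    vnEntropy hT.isHermitian ≤ vnEntropy h₁ + vnEntropy h₂ ∧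
    (vnEntropy hT.isHermitian = vnEntropy h₁ + vnEntropy h₂ ↔ T = T₁ ⊗ₖ T₂) := by
  obtain rfl : T₁ = partialTraceRight T := Matrix.ext hT₁def
  obtain rfl : T₂ = partialTraceLeft T := Matrix.ext hT₂def
  exact vnEntropy_subadditivity_general hT htrace
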